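/- Comparison with a memoryless reference measure (generalised Böcherer–Amjad bound): In the setting of the main comparison theorem with the standard length function ℓ ≡ 1 on interior nodes (so ℓ(P) = ℓ_♯(P)), assume additionally that the local entropy H_q(x) equals a constant h (finite) for every interior node x. Then for every ε > 0 (with uniform-summability witness M_ε) and every δ with 0 < δ < 1/2, |H(P)/ℓ_♯(P) − h| ≤ 2ε + M_ε·φ(δ) + (C/δ)·√(D(P‖Q)/ℓ_♯(P)), where C = 2√2/(e·√(ln 2)). -/

import Mathlib

open scoped BigOperators
open Filter

noncomputable section

/-- The entropy function `φ(t) = t·log₂(1/t)` (which vanishes at `t = 0`). -/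
def phi (t : ℝ) : ℝ := t * Real.logb 2 (1 / t)

/-- A rooted tree: a set of finite lists over ℕ containing the empty list (the root)
and closed under taking prefixes. -/
def IsTree (T : Set (List ℕ)) : Prop :=
  ([] : List ℕ) ∈ T ∧ ∀ x ∈ T, ∀ y : List ℕ, y <+: x → y ∈ T

/-- The successors of `x` in `T`: one-entry extensions of `x` lying in `T`. -/
def succs (T : Set (List ℕ)) (x : List ℕ) : Set (List ℕ) :=
  {y | y ∈ T ∧ ∃ n : ℕ, y = x ++ [n]}

/-- `x` is a leaf of `T`. -/
def IsLeaf (T : Set (List ℕ)) (x : List ℕ) : Prop :=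
  x ∈ T ∧ succs T x = ∅

/-- The boundary of `T`: its set of leaves. -/
def bdry (T : Set (List ℕ)) : Set (List ℕ) := {x | IsLeaf T x}

/-- The interior of `T`. -/
def intr (T : Set (List ℕ)) : Set (List ℕ) := T \ bdry T

/-- No vertex has exactly one successor. -/
def NoUnary (T : Set (List ℕ)) : Prop :=
  ∀ x ∈ T, ∀ y : List ℕ, succs T x ≠ {y}

/-- `T` has no infinite geodesic. -/
def NoInfGeo (T : Set (List ℕ)) : Prop :=
  ¬ ∃ ξ : ℕ → ℕ, ∀ n : ℕ, (List.ofFn fun i : Fin n => ξ i) ∈ T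

/-- `∂T_x`: the set of leaves having `x` as a prefix. -/
def cone (T : Set (List ℕ)) (x : List ℕ) : Set (List ℕ) :=
  {v | v ∈ bdry T ∧ x <+: v}

/-- `P(∂T_x)`. -/
def mass (T : Set (List ℕ)) (P : List ℕ → ℝ) (x : List ℕ) : ℝ :=
  ∑' v : cone T x, P v

/-- `|x|_ℓ`: the sum of `ℓ(y)` over the proper prefixes `y` of `x`. -/
def lenWt (ℓ : List ℕ → ℝ) (x : List ℕ) : ℝ :=
  ∑ i ∈ Finset.range x.length, ℓ (x.take i)

/-- Expected length `ℓ(P)`. -/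
def expLen (T : Set (List ℕ)) (ℓ P : List ℕ → ℝ) : ℝ :=
  ∑' v : bdry T, lenWt ℓ v * P v

/-- Forward transition probability `p(y|x) = P(∂T_y)/P(∂T_x)`. -/
def fwd (T : Set (List ℕ)) (P : List ℕ → ℝ) (x y : List ℕ) : ℝ :=
  mass T P y / mass T P x

/-- Node-average measure `μ_P(x) = ℓ(x)·P(∂T_x)/ℓ(P)`. -/
def nodeAvg (T : Set (List ℕ)) (ℓ P : List ℕ → ℝ) (x : List ℕ) : ℝ :=
  ℓ x * mass T P x / expLen T ℓ P

/-- A (fully supported) probability measure on a set `S` of vertices. -/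
def IsProbOn (S : Set (List ℕ)) (P : List ℕ → ℝ) : Prop :=
  (∀ v ∈ S, 0 < P v) ∧ HasSum (fun v : S => P v) 1

/-- The local entropy `H_q(x) = ∑_{y∈N(x)} φ(q(y|x))`. -/
def Hloc (T : Set (List ℕ)) (Q : List ℕ → ℝ) (x : List ℕ) : ℝ :=
  ∑' y : succs T x, phi (fwd T Q x y)

lemma aux_k {t : ℝ} (ht : 0 < t) :
    (t - 1) * (5 * t + 1) / (2 * t * (t + 2)) ≤ Real.log t := by
  set k : ℝ → ℝ := fun t => Real.log t - (t - 1) * (5 * t + 1) / (2 * t * (t + 2)) with hk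
  have hd : ∀ t : ℝ, 0 < t → HasDerivAt k ((t - 1) ^ 3 / (t ^ 2 * (t + 2) ^ 2)) t := by
    intro t ht
    have h1 : HasDerivAt (fun t : ℝ => (t - 1) * (5 * t + 1)) (1 * (5 * t + 1) + (t - 1) * 5) t := by
      have a1 : HasDerivAt (fun t : ℝ => t - 1) 1 t := (hasDerivAt_id t).sub_const 1
      have a2 : HasDerivAt (fun t : ℝ => 5 * t + 1) 5 t := by
        simpa using ((hasDerivAt_id t).const_mul 5).add_const 1
      exact a1.mul a2
    have h2 : HasDerivAt (fun t : ℝ => 2 * t * (t + 2)) (2 * (t + 2) + 2 * t * 1) t := by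
      have a1 : HasDerivAt (fun t : ℝ => 2 * t) 2 t := by
        simpa using (hasDerivAt_id t).const_mul 2
      exact a1.mul ((hasDerivAt_id t).add_const 2)
    have h3 := (Real.hasDerivAt_log ht.ne').sub (h1.div h2 (by positivity))
    refine h3.congr_deriv ?_
    have h5 : t + 2 ≠ 0 := by positivity
    field_simp
    ring
  have hk1 : k 1 = 0 := by simp [hk]
  have : 0 ≤ k t := by
    rw [← hk1]
    rcases le_total 1 t with h | h
    · have : MonotoneOn k (Set.Ici 1) := by
        apply monotoneOn_of_deriv_nonneg (convex_Ici 1)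
        · intro x hx
          exact (hd x (lt_of_lt_of_le one_pos hx)).continuousAt.continuousWithinAt
        · intro x hx
          rw [interior_Ici] at hx
          exact (hd x (one_pos.trans hx)).differentiableAt.differentiableWithinAt
        · intro x hx
          rw [interior_Ici] at hx
          have hx : (1:ℝ) < x := hx
          rw [(hd x (one_pos.trans hx)).deriv]
          have : 0 ≤ x - 1 := by linarith
          positivity
      exact this (by simp) h h
    · have : AntitoneOn k (Set.Ioc 0 1) := by
        apply antitoneOn_of_deriv_nonpos (convex_Ioc 0 1)
        · intro x hx
          exact (hd x hx.1).continuousAt.continuousWithinAt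
        · intro x hx
          rw [interior_Ioc] at hx
          exact (hd x hx.1).differentiableAt.differentiableWithinAt
        · intro x hx
          rw [interior_Ioc] at hx
          rw [(hd x hx.1).deriv]
          apply div_nonpos_of_nonpos_of_nonneg
          · have : 0 ≤ (1 - x) ^ 3 := pow_nonneg (by linarith [hx.2]) 3
            nlinarith
          · positivity
      exact this ⟨ht, h⟩ (by simp) h
  simp only [hk] at this
  linarith

lemma aux_pinsker {a b : ℝ} (ha : 0 < a) (hb : 0 < b) :
    |a - b| ^ 2 ≤ ((2 * a + 4 * b) / 3) * (a * (Real.log (a / b) - 1 + b / a)) := by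
  have h := aux_k (div_pos ha hb)
  have e : (a / b - 1) * (5 * (a / b) + 1) / (2 * (a / b) * (a / b + 2))
      = (a - b) * (5 * a + b) / (2 * a * (a + 2 * b)) := by
    field_simp
  rw [e] at h
  have h2 : a * ((a - b) * (5 * a + b) / (2 * a * (a + 2 * b)) - 1 + b / a)
      ≤ a * (Real.log (a / b) - 1 + b / a) := by gcongr
  have h3 := mul_le_mul_of_nonneg_left h2 (show 0 ≤ (2 * a + 4 * b) / 3 by positivity)
  refine le_trans (le_of_eq ?_) h3
  rw [sq_abs]
  field_simp
  ring

lemma phi_eq (t : ℝ) : phi t = -(t * Real.log t) / Real.log 2 := by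
  unfold phi Real.logb
  rw [one_div, Real.log_inv]
  ring

lemma phi_nonneg {t : ℝ} (h0 : 0 ≤ t) (h1 : t ≤ 1) : 0 ≤ phi t := by
  rw [phi_eq]
  have := Real.log_nonpos h0 h1
  apply div_nonneg _ (Real.log_nonneg (by norm_num))
  nlinarith

lemma phi_le {t : ℝ} (h0 : 0 ≤ t) : phi t ≤ 1 / (Real.exp 1 * Real.log 2) := by
  have hl : 0 < Real.log 2 := Real.log_pos (by norm_num)
  rcases h0.eq_or_lt with rfl | h0
  · simp [phi]; positivity
  rw [phi_eq, ← div_div]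
  apply div_le_div_of_nonneg_right _ hl.le
  have := Real.add_one_le_exp (-Real.log t - 1)
  rw [Real.exp_sub, Real.exp_neg, Real.exp_log h0] at this
  have h2 : t * (-Real.log t - 1 + 1) ≤ t * (t⁻¹ / Real.exp 1) := by gcongr
  have h3 : t * (t⁻¹ / Real.exp 1) = 1 / Real.exp 1 := by field_simp
  linarith

lemma log_add_le {p d : ℝ} (hp : 0 ≤ p) (hd : 0 < d) (h1 : p + d ≤ 1) :
    phi p - phi (p + d) ≤ d / Real.log 2 := by
  have hl : 0 < Real.log 2 := Real.log_pos (by norm_num)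
  rw [phi_eq, phi_eq, ← sub_div]
  apply div_le_div_of_nonneg_right _ hl.le
  have hlog : Real.log (p + d) ≤ 0 := Real.log_nonpos (by positivity) h1
  rcases hp.eq_or_lt with rfl | hp
  · simp at *; nlinarith
  have h2 := Real.log_le_sub_one_of_pos (show 0 < (p + d) / p by positivity)
  rw [Real.log_div (by positivity) hp.ne'] at h2
  have h3 := mul_le_mul_of_nonneg_left h2 hp.le
  have h4 : p * ((p + d) / p - 1) = d := by field_simp; ring
  nlinarith

lemma phi_sub {p d : ℝ} (hp : 0 ≤ p) (hd : 0 < d) :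
    phi (p + d) - phi p ≤ phi d := by
  have hl : 0 < Real.log 2 := Real.log_pos (by norm_num)
  rw [phi_eq, phi_eq, phi_eq, ← sub_div]
  apply div_le_div_of_nonneg_right _ hl.le
  rcases hp.eq_or_lt with rfl | hp
  · simp
  have h1 : Real.log p ≤ Real.log (p + d) := Real.log_le_log hp (by linarith)
  have h2 : Real.log d ≤ Real.log (p + d) := Real.log_le_log hd (by linarith)
  nlinarith

lemma phi_half {d δ : ℝ} (hd : 0 < d) (h : d ≤ δ / 2) (hδ : δ < 1 / 2) :
    phi d ≤ phi δ ∧ d / Real.log 2 ≤ phi d := by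
  have hl : 0 < Real.log 2 := Real.log_pos (by norm_num)
  have hl2 := Real.log_two_gt_d9
  have hδ0 : 0 < δ := by linarith
  have l4 : Real.log (1 / 4) = - (2 * Real.log 2) := by
    rw [show (1 / 4 : ℝ) = (2 ^ 2)⁻¹ by norm_num, Real.log_inv, Real.log_pow]; norm_num
  have hd4 : Real.log d ≤ - (2 * Real.log 2) := by
    rw [← l4]; exact Real.log_le_log hd (by linarith)
  have hδ2 : Real.log δ ≤ - Real.log 2 := by
    rw [← Real.log_inv]; exact Real.log_le_log hδ0 (by norm_num; linarith)
  rw [phi_eq, phi_eq]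
  constructor
  · apply div_le_div_of_nonneg_right _ hl.le
    -- log (δ/2) - log d ≤ (δ/2)/d - 1
    have h2 := Real.log_le_sub_one_of_pos (show 0 < (δ / 2) / d by positivity)
    rw [Real.log_div (by positivity) hd.ne', Real.log_div hδ0.ne' (by norm_num)] at h2
    have h3 := mul_le_mul_of_nonneg_left h2 hd.le
    have h4 : d * (δ / 2 / d - 1) = δ / 2 - d := by field_simp
    -- -d log d ≤ δ/2 - d - d (log δ - log 2)
    have h5 : -Real.log δ + Real.log 2 ≤ 2 * (-Real.log δ) := by linarith
    have h6 : (δ / 2 - d) * 1 ≤ (δ / 2 - d) * (-Real.log δ + Real.log 2) := by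
      apply mul_le_mul_of_nonneg_left _ (by linarith); linarith
    have h7 : δ / 2 * (-Real.log δ + Real.log 2) ≤ δ / 2 * (2 * (-Real.log δ)) := by gcongr
    nlinarith
  · apply div_le_div_of_nonneg_right _ hl.le
    nlinarith

lemma phi_diff_aux {p q δ : ℝ} (hp : 0 ≤ p) (hpq : p ≤ q) (hq1 : q ≤ 1)
    (h0 : 0 < δ) (hδ : δ < 1 / 2) :
    |phi p - phi q| ≤ phi δ + 2 / (Real.exp 1 * Real.log 2) / δ * |p - q| := by
  have hl : 0 < Real.log 2 := Real.log_pos (by norm_num)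
  have hph : 0 ≤ phi δ := phi_nonneg h0.le (by linarith)
  rcases hpq.eq_or_lt with rfl | hlt
  · simpa using hph
  rw [abs_of_neg (show p - q < 0 by linarith)]
  rcases le_total (q - p) (δ / 2) with h | h
  · have h1 := phi_half (show 0 < q - p by linarith) h hδ
    have h2 := phi_sub hp (show 0 < q - p by linarith)
    have h3 := log_add_le hp (show 0 < q - p by linarith) (by linarith)
    rw [add_sub_cancel] at h2 h3
    have : 0 ≤ 2 / (Real.exp 1 * Real.log 2) / δ * (-(p - q)) := by
      have : 0 ≤ -(p - q) := by linarith
      positivity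
    rw [abs_le]; constructor <;> linarith
  · have h1 := phi_le hp
    have h2 := phi_le (hp.trans hpq)
    have h3 := phi_nonneg hp (by linarith)
    have h4 := phi_nonneg (hp.trans hpq) hq1
    have : 2 / (Real.exp 1 * Real.log 2) / δ * (δ / 2)
        ≤ 2 / (Real.exp 1 * Real.log 2) / δ * (-(p - q)) := by
      gcongr; linarith
    have e : 2 / (Real.exp 1 * Real.log 2) / δ * (δ / 2) = 1 / (Real.exp 1 * Real.log 2) := by
      field_simp
    rw [abs_le]; constructor <;> linarith

lemma phi_diff {p q δ : ℝ} (hp : 0 ≤ p) (hp1 : p ≤ 1) (hq : 0 ≤ q) (hq1 : q ≤ 1)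
    (h0 : 0 < δ) (hδ : δ < 1 / 2) :
    |phi p - phi q| ≤ phi δ + 2 / (Real.exp 1 * Real.log 2) / δ * |p - q| := by
  rcases le_total p q with h | h
  · exact phi_diff_aux hp h hq1 h0 hδ
  · rw [abs_sub_comm, abs_sub_comm p q]
    exact phi_diff_aux hq h hp1 h0 hδ
lemma hasSum_of_fiber {α β : Type*} {f : α × β → ℝ} {w : α → ℝ} {s : ℝ} (hf : ∀ z, 0 ≤ f z)
    (hw : ∀ a, HasSum (fun b => f (a, b)) (w a)) (hs : HasSum w s) : HasSum f s := by
  have hsum : Summable f := by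
    rw [summable_prod_of_nonneg hf]
    refine ⟨fun a => (hw a).summable, ?_⟩
    have : (fun x => ∑' y, f (x, y)) = w := funext fun a => (hw a).tsum_eq
    rw [this]; exact hs.summable
  have := hsum.hasSum.prod_fiberwise hw
  rw [← this.unique hs]
  exact hsum.hasSum

lemma hasSum_swap {α β : Type*} {f : α → β → ℝ} {w : α → ℝ} {u : β → ℝ} {s : ℝ}
    (hf : ∀ a b, 0 ≤ f a b) (hw : ∀ a, HasSum (fun b => f a b) (w a))
    (hu : ∀ b, HasSum (fun a => f a b) (u b)) (hs : HasSum w s) : HasSum u s := by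
  have h1 : HasSum (fun z : α × β => f z.1 z.2) s :=
    hasSum_of_fiber (fun z => hf _ _) hw hs
  have h2 : HasSum (fun z : β × α => f z.2 z.1) s :=
    (Equiv.prodComm β α).hasSum_iff.mpr h1
  exact h2.prod_fiberwise hu

lemma hasSum_prefix (g : List ℕ → ℝ) (v : List ℕ) :
    HasSum (fun z : List ℕ × ℕ => if z.1 ++ [z.2] <+: v then g (z.1 ++ [z.2]) else 0)
      (∑ i ∈ Finset.range v.length, g (v.take (i + 1))) := by
  induction v using List.reverseRecOn with
  | nil => simp
  | append_singleton v m ih =>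
    have h1 : HasSum (fun z : List ℕ × ℕ => if z = (v, m) then g (v ++ [m]) else 0)
      (g (v ++ [m])) := hasSum_ite_eq _ _
    have h2 := ih.add h1
    convert h2 using 1
    · funext z
      obtain ⟨x, n⟩ := z
      simp only [List.prefix_concat_iff, Prod.mk.injEq]
      by_cases hz : x = v ∧ n = m
      · obtain ⟨rfl, rfl⟩ := hz
        have : ¬ (x ++ [n] <+: x) := by
          intro hh
          have := hh.length_le
          simp at this
        simp [this]
      · have : ¬ (x ++ [n] = v ++ [m]) := by
          intro hh
          apply hz
          have := List.append_inj' hh rfl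
          simpa using this
        simp [hz, this]
    · rw [List.length_append, List.length_singleton, Finset.sum_range_succ]
      congr 1
      · apply Finset.sum_congr rfl
        intro i hi
        rw [List.take_append_of_le_length (by simpa using hi)]
      · rw [List.take_of_length_le (by simp)]

lemma mass_hasSum {T : Set (List ℕ)} {P : List ℕ → ℝ} (hP : IsProbOn (bdry T) P) (y : List ℕ) :
    HasSum (fun v : bdry T => if y <+: (v : List ℕ) then P v else 0) (mass T P y) := by
  have hs : Summable (fun v : bdry T => if y <+: (v : List ℕ) then P v else 0) := by
    refine hP.2.summable.of_nonneg_of_le (fun v => ?_) (fun v => ?_)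
    · split_ifs
      · exact (hP.1 v v.2).le
      · exact le_rfl
    · split_ifs
      · exact le_rfl
      · exact (hP.1 v v.2).le
  have : mass T P y = ∑' v : bdry T, if y <+: (v : List ℕ) then P v else 0 := by
    unfold mass
    rw [tsum_subtype (cone T y) P,
      tsum_subtype (bdry T) (fun v => if y <+: (v : List ℕ) then P v else 0)]
    congr 1
    funext v
    by_cases h1 : v ∈ bdry T <;> by_cases h2 : y <+: v <;> simp [Set.indicator, cone, h1, h2]
  rw [this]
  exact hs.hasSum

lemma mass_nonneg {T : Set (List ℕ)} {P : List ℕ → ℝ} (hP : IsProbOn (bdry T) P) (y : List ℕ) :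
    0 ≤ mass T P y := by
  refine (mass_hasSum hP y).nonneg (fun v => ?_)
  split_ifs
  · exact (hP.1 v v.2).le
  · exact le_rfl

lemma mass_pos {T : Set (List ℕ)} {P : List ℕ → ℝ} (hP : IsProbOn (bdry T) P) {y v : List ℕ}
    (hv : v ∈ bdry T) (hy : y <+: v) : 0 < mass T P y := by
  have h := le_hasSum (mass_hasSum hP y) ⟨v, hv⟩ (fun w _ => by
    split_ifs
    · exact (hP.1 w w.2).le
    · exact le_rfl)
  simp only [hy, if_true] at h
  exact (hP.1 v hv).trans_le h

lemma mass_zero {T : Set (List ℕ)} {P : List ℕ → ℝ} {y : List ℕ}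
    (hy : ∀ v ∈ bdry T, ¬ y <+: v) : mass T P y = 0 := by
  unfold mass
  have : IsEmpty (cone T y) := ⟨fun v => hy v v.2.1 v.2.2⟩
  exact tsum_empty

lemma mass_root {T : Set (List ℕ)} {P : List ℕ → ℝ} (hP : IsProbOn (bdry T) P) :
    mass T P [] = 1 := by
  have h := mass_hasSum hP []
  simp only [List.nil_prefix, if_true] at h
  exact h.unique hP.2

lemma leaf_ext {T : Set (List ℕ)} (hT : IsTree T) {x v : List ℕ} {n : ℕ}
    (hx : x ∈ bdry T) (hv : v ∈ bdry T) : ¬ (x ++ [n] <+: v) := by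
  intro h
  have : x ++ [n] ∈ succs T x := ⟨hT.2 v hv.1 _ h, n, rfl⟩
  rw [hx.2] at this
  exact this

lemma leaf_prefix {T : Set (List ℕ)} (hT : IsTree T) {x v : List ℕ}
    (hx : x ∈ bdry T) (hv : v ∈ bdry T) (h : x <+: v) : v = x := by
  obtain ⟨t, rfl⟩ := h
  cases t with
  | nil => simp
  | cons n t => exact absurd ⟨t, by simp⟩ (leaf_ext (n := n) hT hx hv)

lemma mass_leaf {T : Set (List ℕ)} (hT : IsTree T) {P : List ℕ → ℝ} (hP : IsProbOn (bdry T) P)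
    {x : List ℕ} (hx : x ∈ bdry T) : mass T P x = P x := by
  refine (mass_hasSum hP x).unique ?_
  have := hasSum_ite_eq (⟨x, hx⟩ : bdry T) (P x)
  convert this using 1
  funext v
  by_cases h : x <+: (v : List ℕ)
  · have := leaf_prefix hT hx v.2 h
    have h2 : v = ⟨x, hx⟩ := Subtype.ext this
    simp [h2]
  · have h2 : v ≠ ⟨x, hx⟩ := by rintro rfl; simp at h
    simp [h, h2]

lemma mass_add {T : Set (List ℕ)} {P : List ℕ → ℝ} (hP : IsProbOn (bdry T) P)
    {x : List ℕ} (hx : x ∉ bdry T) : HasSum (fun n : ℕ => mass T P (x ++ [n])) (mass T P x) := by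
  refine hasSum_swap (f := fun (v : bdry T) (n : ℕ) => if x ++ [n] <+: (v : List ℕ) then P v else 0)
    ?_ ?_ (fun n => mass_hasSum hP _) (mass_hasSum hP x)
  · intro v n
    split_ifs
    · exact (hP.1 v v.2).le
    · exact le_rfl
  · intro v
    by_cases h : x <+: (v : List ℕ)
    · obtain ⟨v, hv⟩ := v
      obtain ⟨t, rfl⟩ := h
      cases t with
      | nil => simp at hv; exact absurd hv hx
      | cons m t =>
        have := hasSum_ite_eq m (P (x ++ m :: t))
        simpa [List.prefix_append_right_inj] using this
    · have h2 : ∀ n, ¬ (x ++ [n] <+: (v : List ℕ)) := fun n hn => h ((List.prefix_append _ _).trans hn)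
      simp [h, h2, hasSum_zero]

lemma fub {T : Set (List ℕ)} {P : List ℕ → ℝ} (hP : IsProbOn (bdry T) P) (g : List ℕ → ℝ)
    (hg : ∀ v ∈ bdry T, ∀ x n, x ++ [n] <+: v → 0 ≤ g (x ++ [n])) (s : ℝ) :
    HasSum (fun v : bdry T => P v * ∑ i ∈ Finset.range (v : List ℕ).length,
        g ((v : List ℕ).take (i + 1))) s ↔
    HasSum (fun z : List ℕ × ℕ => mass T P (z.1 ++ [z.2]) * g (z.1 ++ [z.2])) s := by
  set f : bdry T → List ℕ × ℕ → ℝ := fun v z =>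
    P v * (if z.1 ++ [z.2] <+: (v : List ℕ) then g (z.1 ++ [z.2]) else 0) with hf
  have f0 : ∀ v z, 0 ≤ f v z := by
    intro v z
    apply mul_nonneg (hP.1 v v.2).le
    split_ifs with h
    · exact hg v v.2 _ _ h
    · exact le_rfl
  have h1 : ∀ v, HasSum (fun z => f v z) (P v * ∑ i ∈ Finset.range (v : List ℕ).length,
        g ((v : List ℕ).take (i + 1))) := fun v => (hasSum_prefix g v).mul_left _
  have h2 : ∀ z, HasSum (fun v => f v z) (mass T P (z.1 ++ [z.2]) * g (z.1 ++ [z.2])) := by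
    intro z
    have e : (fun v => f v z) = fun v : bdry T =>
        (if z.1 ++ [z.2] <+: (v : List ℕ) then P v else 0) * g (z.1 ++ [z.2]) := by
      funext v
      simp only [hf]
      split_ifs <;> simp
    rw [e]
    exact (mass_hasSum hP (z.1 ++ [z.2])).mul_right (g (z.1 ++ [z.2]))
  exact ⟨fun h => hasSum_swap f0 h1 h2 h, fun h => hasSum_swap (fun a b => f0 b a) h2 h1 h⟩
lemma hasSum_conv {ι : Type*} {f g : ι → ℝ} {s t : ℝ} (h : HasSum g t) (e : ∀ i, f i = g i)
    (st : s = t) : HasSum f s := by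
  rw [st, show f = g from funext e]
  exact h

lemma cs_tsum {ι : Type*} {f a c : ι → ℝ} {α γ : ℝ} (hf : ∀ i, 0 ≤ f i) (ha : ∀ i, 0 ≤ a i)
    (hc : ∀ i, 0 ≤ c i) (hle : ∀ i, f i ^ 2 ≤ a i * c i) (hα : HasSum a α) (hγ : HasSum c γ) :
    Summable f ∧ ∑' i, f i ≤ Real.sqrt (α * γ) := by
  have key : ∀ s : Finset ι, ∑ i ∈ s, f i ≤ Real.sqrt (α * γ) := by
    intro s
    apply Real.le_sqrt_of_sq_le
    refine (Finset.sum_sq_le_sum_mul_sum_of_sq_le_mul s (fun i _ => ha i) (fun i _ => hc i)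
      (fun i _ => hle i)).trans ?_
    apply mul_le_mul (sum_le_hasSum s (fun i _ => ha i) hα) (sum_le_hasSum s (fun i _ => hc i) hγ)
      (Finset.sum_nonneg fun i _ => hc i) (hα.nonneg ha)
  have hs : Summable f := summable_of_sum_le hf key
  exact ⟨hs, hs.tsum_le_of_sum_le key⟩

lemma split_hasSum {α : Type*} {S : Set α} {F : Finset α} (hF : ↑F ⊆ S) {f : α → ℝ}
    (hs : Summable fun y : {y : α // y ∈ S ∧ y ∉ F} => f y) :
    HasSum (fun y : S => f y)
      (∑ y ∈ F, f y + ∑' y : {y : α // y ∈ S ∧ y ∉ F}, f y) := by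
  have h1 : HasSum (Set.indicator (↑F : Set α) f) (∑ y ∈ F, f y) :=
    hasSum_subtype_iff_indicator.mp (F.hasSum f)
  have h2 : HasSum (Set.indicator {y : α | y ∈ S ∧ y ∉ F} f)
      (∑' y : {y : α // y ∈ S ∧ y ∉ F}, f y) :=
    hasSum_subtype_iff_indicator.mp hs.hasSum
  have h3 := h1.add h2
  refine (hasSum_subtype_iff_indicator (s := S) (f := f)).mpr ?_
  have e : Set.indicator S f = fun y => Set.indicator (↑F : Set α) f y +
      Set.indicator {y : α | y ∈ S ∧ y ∉ F} f y := by
    funext y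
    by_cases hy : y ∈ F
    · have : y ∈ S := hF hy
      simp [Set.indicator, hy, this]
    · by_cases hS : y ∈ S <;> simp [Set.indicator, hy, hS]
  rw [e]
  exact h3

lemma succ_hasSum {T : Set (List ℕ)} {x : List ℕ} {f : List ℕ → ℝ} (hf : ∀ y, y ∉ T → f y = 0)
    {s : ℝ} : HasSum (fun n : ℕ => f (x ++ [n])) s ↔ HasSum (fun y : succs T x => f y) s := by
  have hinj : Function.Injective (fun n : ℕ => x ++ [n]) := by
    intro a b hab
    simpa using hab
  rw [show (fun y : succs T x => f y) = f ∘ ((↑) : succs T x → List ℕ) from rfl,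
    hasSum_subtype_iff_indicator, ← hinj.hasSum_iff]
  · have : (fun n : ℕ => f (x ++ [n])) = (succs T x).indicator f ∘ fun n : ℕ => x ++ [n] := by
      funext n
      by_cases h : x ++ [n] ∈ T
      · simp [Set.indicator, succs, h]
      · simp [Set.indicator, succs, h, hf _ h]
    rw [this]
  · intro y hy
    apply Set.indicator_of_notMem
    rintro ⟨-, n, rfl⟩
    exact hy ⟨n, rfl⟩

lemma not_intr {T : Set (List ℕ)} (hT : IsTree T) (P : List ℕ → ℝ) {x : List ℕ}
    (hx : x ∉ intr T) (n : ℕ) : mass T P (x ++ [n]) = 0 := by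
  apply mass_zero
  intro v hv h
  by_cases hb : x ∈ bdry T
  · exact leaf_ext hT hb hv h
  · exact hx ⟨hT.2 v hv.1 x ((List.prefix_append _ _).trans h), hb⟩

lemma not_tree {T : Set (List ℕ)} (hT : IsTree T) (P : List ℕ → ℝ) {x : List ℕ}
    (hx : x ∉ T) : mass T P x = 0 := by
  apply mass_zero
  intro v hv h
  exact hx (hT.2 v hv.1 x h)

lemma mass_dich {T : Set (List ℕ)} {P Q : List ℕ → ℝ} (hP : IsProbOn (bdry T) P)
    (hQ : IsProbOn (bdry T) Q) (y : List ℕ) :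
    (0 < mass T P y ∧ 0 < mass T Q y) ∨ (mass T P y = 0 ∧ mass T Q y = 0) := by
  by_cases h : ∃ v ∈ bdry T, y <+: v
  · obtain ⟨v, hv, h⟩ := h
    exact Or.inl ⟨mass_pos hP hv h, mass_pos hQ hv h⟩
  · push Not at h
    exact Or.inr ⟨mass_zero h, mass_zero h⟩

lemma mass_mono {T : Set (List ℕ)} {P : List ℕ → ℝ} (hP : IsProbOn (bdry T) P) (x y : List ℕ) :
    mass T P (x ++ y) ≤ mass T P x := by
  refine hasSum_le (fun v => ?_) (mass_hasSum hP (x ++ y)) (mass_hasSum hP x)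
  by_cases h : x ++ y <+: (v : List ℕ)
  · have : x <+: (v : List ℕ) := (List.prefix_append _ _).trans h
    simp [h, this]
  · rw [if_neg h]
    split_ifs
    · exact (hP.1 v v.2).le
    · exact le_rfl

lemma fwd_bd {T : Set (List ℕ)} {P : List ℕ → ℝ} (hP : IsProbOn (bdry T) P) (x y : List ℕ) :
    0 ≤ fwd T P x (x ++ y) ∧ fwd T P x (x ++ y) ≤ 1 :=
  ⟨div_nonneg (mass_nonneg hP _) (mass_nonneg hP _),
    div_le_one_of_le₀ (mass_mono hP x y) (mass_nonneg hP _)⟩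

lemma dl_take {v : List ℕ} {i : ℕ} (hi : i < v.length) :
    (v.take (i + 1)).dropLast = v.take i := by
  rw [List.dropLast_eq_take, List.take_take, List.length_take]
  congr 1
  omega

lemma tele {T : Set (List ℕ)} (hT : IsTree T) {P : List ℕ → ℝ} (hP : IsProbOn (bdry T) P)
    {v : List ℕ} (hv : v ∈ bdry T) :
    ∑ i ∈ Finset.range v.length,
      Real.log (fwd T P (v.take (i + 1)).dropLast (v.take (i + 1))) = Real.log (P v) := by
  have h : ∀ i ∈ Finset.range v.length,
      Real.log (fwd T P (v.take (i + 1)).dropLast (v.take (i + 1)))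
        = Real.log (mass T P (v.take (i + 1))) - Real.log (mass T P (v.take i)) := by
    intro i hi
    rw [dl_take (by simpa using hi)]
    unfold fwd
    rw [Real.log_div (mass_pos hP hv (List.take_prefix _ _)).ne'
      (mass_pos hP hv (List.take_prefix _ _)).ne']
  rw [Finset.sum_congr rfl h, Finset.sum_range_sub (fun i => Real.log (mass T P (v.take i)))]
  simp [mass_root hP, mass_leaf hT hP hv]

lemma w_hasSum {T : Set (List ℕ)} (hT : IsTree T) {P : List ℕ → ℝ} (hP : IsProbOn (bdry T) P)
    (x : List ℕ) : HasSum (fun n : ℕ => mass T P (x ++ [n]))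
      ((intr T).indicator (mass T P) x) := by
  by_cases hx : x ∈ intr T
  · rw [Set.indicator_of_mem hx]
    exact mass_add hP hx.2
  · rw [Set.indicator_of_notMem hx]
    simp [not_intr hT P hx, hasSum_zero]

lemma wB_hasSum {T : Set (List ℕ)} (hT : IsTree T) {P Q : List ℕ → ℝ} (hP : IsProbOn (bdry T) P)
    (hQ : IsProbOn (bdry T) Q)
    (x : List ℕ) : HasSum (fun n : ℕ => mass T P x * fwd T Q x (x ++ [n]))
      ((intr T).indicator (mass T P) x) := by
  have h := (w_hasSum hT hQ x).mul_left (mass T P x / mass T Q x)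
  refine hasSum_conv h ?_ ?_
  · intro n; unfold fwd; ring
  · by_cases hx : x ∈ intr T
    · rw [Set.indicator_of_mem hx, Set.indicator_of_mem hx]
      rcases mass_dich hP hQ x with h | h
      · field_simp [h.2.ne']
      · simp [h]
    · rw [Set.indicator_of_notMem hx, Set.indicator_of_notMem hx, mul_zero]

lemma len_hasSum {T : Set (List ℕ)} {P : List ℕ → ℝ}
    (hl : Summable fun v : bdry T => ((v : List ℕ).length : ℝ) * P v) :
    HasSum (fun v : bdry T => P v * ((v : List ℕ).length : ℝ)) (expLen T (fun _ => 1) P) := by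
  have : expLen T (fun _ => 1) P = ∑' v : bdry T, P v * ((v : List ℕ).length : ℝ) := by
    unfold expLen lenWt
    congr 1
    funext v
    simp [mul_comm]
  rw [this]
  simp_rw [mul_comm _ (P _)] at hl
  exact hl.hasSum

lemma A_hasSum {T : Set (List ℕ)} {P : List ℕ → ℝ} (hP : IsProbOn (bdry T) P)
    (hl : Summable fun v : bdry T => ((v : List ℕ).length : ℝ) * P v) :
    HasSum (fun z : List ℕ × ℕ => mass T P (z.1 ++ [z.2])) (expLen T (fun _ => 1) P) := by
  have := (fub hP (fun _ => 1) (by intros; norm_num) (expLen T (fun _ => 1) P)).mp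
    (by simpa using len_hasSum hl)
  simpa using this

lemma w_total {T : Set (List ℕ)} (hT : IsTree T) {P : List ℕ → ℝ} (hP : IsProbOn (bdry T) P)
    (hl : Summable fun v : bdry T => ((v : List ℕ).length : ℝ) * P v) :
    HasSum ((intr T).indicator (mass T P)) (expLen T (fun _ => 1) P) :=
  (A_hasSum hP hl).prod_fiberwise (w_hasSum hT hP)

lemma B_hasSum {T : Set (List ℕ)} (hT : IsTree T) {P Q : List ℕ → ℝ} (hP : IsProbOn (bdry T) P)
    (hQ : IsProbOn (bdry T) Q)
    (hl : Summable fun v : bdry T => ((v : List ℕ).length : ℝ) * P v) :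
    HasSum (fun z : List ℕ × ℕ => mass T P z.1 * fwd T Q z.1 (z.1 ++ [z.2]))
      (expLen T (fun _ => 1) P) :=
  hasSum_of_fiber (fun z => mul_nonneg (mass_nonneg hP _) (fwd_bd hQ _ _).1)
    (wB_hasSum hT hP hQ) (w_total hT hP hl)

/-- the divergence density -/
def g2 (T : Set (List ℕ)) (P Q : List ℕ → ℝ) (y : List ℕ) : ℝ :=
  Real.log (fwd T P y.dropLast y / fwd T Q y.dropLast y) - 1
    + fwd T Q y.dropLast y / fwd T P y.dropLast y

lemma g2_form {T : Set (List ℕ)} {P Q : List ℕ → ℝ} (hP : IsProbOn (bdry T) P)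
    (hQ : IsProbOn (bdry T) Q) (x : List ℕ) (n : ℕ) :
    (0 < mass T P (x ++ [n]) ∧ 0 < mass T P x * fwd T Q x (x ++ [n]) ∧
      g2 T P Q (x ++ [n]) =
        Real.log (mass T P (x ++ [n]) / (mass T P x * fwd T Q x (x ++ [n]))) - 1
        + (mass T P x * fwd T Q x (x ++ [n])) / mass T P (x ++ [n])) ∨
    (mass T P (x ++ [n]) = 0 ∧ mass T P x * fwd T Q x (x ++ [n]) = 0) := by
  rcases mass_dich hP hQ (x ++ [n]) with h | h
  · left
    have hx : 0 < mass T P x := h.1.trans_le (mass_mono hP _ _)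
    have hx' : 0 < mass T Q x := h.2.trans_le (mass_mono hQ _ _)
    have hq : 0 < fwd T Q x (x ++ [n]) := div_pos h.2 hx'
    refine ⟨h.1, mul_pos hx hq, ?_⟩
    unfold g2
    rw [List.dropLast_concat]
    have e1 : fwd T P x (x ++ [n]) / fwd T Q x (x ++ [n])
        = mass T P (x ++ [n]) / (mass T P x * fwd T Q x (x ++ [n])) := by
      rw [fwd, div_div]
    have e2 : fwd T Q x (x ++ [n]) / fwd T P x (x ++ [n])
        = (mass T P x * fwd T Q x (x ++ [n])) / mass T P (x ++ [n]) := by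
      rw [← inv_div, e1, inv_div]
    rw [e1, e2]
  · right
    simp [fwd, h]

lemma g2_nonneg {T : Set (List ℕ)} {P Q : List ℕ → ℝ} (hP : IsProbOn (bdry T) P)
    (hQ : IsProbOn (bdry T) Q) (x : List ℕ) (n : ℕ) (h : 0 < mass T P (x ++ [n])) :
    0 ≤ g2 T P Q (x ++ [n]) := by
  rcases g2_form hP hQ x n with ⟨h1, h2, h3⟩ | ⟨h1, -⟩
  · rw [h3]
    have := Real.log_le_sub_one_of_pos (div_pos h2 h1)
    rw [← inv_div, Real.log_inv, inv_div] at this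
    linarith
  · exact absurd h1 h.ne'

lemma c_hasSum {T : Set (List ℕ)} (hT : IsTree T) {P Q : List ℕ → ℝ} (hP : IsProbOn (bdry T) P)
    (hQ : IsProbOn (bdry T) Q)
    (hl : Summable fun v : bdry T => ((v : List ℕ).length : ℝ) * P v)
    (hD : Summable fun v : bdry T => |P v * Real.logb 2 (P v / Q v)|) :
    HasSum (fun z : List ℕ × ℕ => mass T P (z.1 ++ [z.2]) * g2 T P Q (z.1 ++ [z.2]))
      (Real.log 2 * ∑' v : bdry T, P v * Real.logb 2 (P v / Q v)) := by
  have hln : 0 < Real.log 2 := Real.log_pos (by norm_num)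
  set L := expLen T (fun _ => 1) P with hL
  have pos : ∀ {x n v}, v ∈ bdry T → x ++ [n] <+: v → 0 < mass T P (x ++ [n]) :=
    fun hv h => mass_pos hP hv h
  refine (fub hP (g2 T P Q) (fun v hv x n h => g2_nonneg hP hQ x n (pos hv h)) _).mp ?_
  -- the ratio part
  set r : List ℕ → ℝ := fun y => fwd T Q y.dropLast y / fwd T P y.dropLast y with hr
  have h1 : HasSum (fun v : bdry T => P v * ∑ i ∈ Finset.range (v : List ℕ).length,
        r ((v : List ℕ).take (i + 1))) L := by
    refine (fub hP r ?_ L).mpr ?_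
    · intro v hv x n h
      simp only [hr, List.dropLast_concat]
      exact div_nonneg (fwd_bd hQ _ _).1 (fwd_bd hP _ _).1
    · convert B_hasSum hT hP hQ hl using 1
      funext z
      simp only [hr, List.dropLast_concat]
      rcases mass_dich hP hQ (z.1 ++ [z.2]) with h | h
      · have hx : 0 < mass T P z.1 := h.1.trans_le (mass_mono hP _ _)
        rw [fwd, fwd]
        have := h.1.ne'
        field_simp
      · simp [fwd, h]
  have h2 := len_hasSum hl
  have h3 : HasSum (fun v : bdry T => Real.log 2 * (P v * Real.logb 2 (P v / Q v)))
      (Real.log 2 * ∑' v : bdry T, P v * Real.logb 2 (P v / Q v)) :=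
    (hD.of_abs.hasSum).mul_left _
  have h4 := (h3.sub h2).add h1
  rw [sub_add_cancel] at h4
  refine hasSum_conv h4 (fun v => ?_) rfl
  obtain ⟨v, hv⟩ := v
  have e : ∑ i ∈ Finset.range v.length, g2 T P Q (v.take (i + 1))
      = Real.log (P v) - Real.log (Q v) - v.length
        + ∑ i ∈ Finset.range v.length, r (v.take (i + 1)) := by
    rw [← tele hT hP hv, ← tele hT hQ hv, ← Finset.sum_sub_distrib,
      show (v.length : ℝ) = ∑ i ∈ Finset.range v.length, (1:ℝ) by simp,
      ← Finset.sum_sub_distrib, ← Finset.sum_add_distrib]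
    apply Finset.sum_congr rfl
    intro i hi
    have hi' : i < v.length := by simpa using hi
    simp only [g2, hr]
    rw [Real.log_div]
    · rw [dl_take hi']
      exact (div_pos (mass_pos hP hv (List.take_prefix _ _))
        (mass_pos hP hv (List.take_prefix _ _))).ne'
    · rw [dl_take hi']
      exact (div_pos (mass_pos hQ hv (List.take_prefix _ _))
        (mass_pos hQ hv (List.take_prefix _ _))).ne'
  simp only [e, Real.logb]
  rw [Real.log_div (hP.1 v hv).ne' (hQ.1 v hv).ne']
  field_simp

lemma H_hasSum {T : Set (List ℕ)} (hT : IsTree T) {P : List ℕ → ℝ} (hP : IsProbOn (bdry T) P)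
    (hHP : Summable fun v : bdry T => phi (P v)) :
    HasSum (fun z : List ℕ × ℕ => mass T P z.1 * phi (fwd T P z.1 (z.1 ++ [z.2])))
      (∑' v : bdry T, phi (P v)) := by
  have hln : 0 < Real.log 2 := Real.log_pos (by norm_num)
  have h := (fub hP (fun y => -Real.log (fwd T P y.dropLast y) / Real.log 2) ?_
    (∑' v : bdry T, phi (P v))).mp ?_
  · convert h using 1
    funext z
    simp only [List.dropLast_concat, phi_eq]
    rcases (mass_nonneg hP z.1).eq_or_lt with h0 | h0
    · have : mass T P (z.1 ++ [z.2]) = 0 :=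
        le_antisymm (h0 ▸ mass_mono hP z.1 [z.2]) (mass_nonneg hP _)
      simp [this, ← h0]
    · have : mass T P (z.1 ++ [z.2]) = mass T P z.1 * fwd T P z.1 (z.1 ++ [z.2]) := by
        unfold fwd; field_simp
      rw [this]; ring
  · intro v hv x n hh
    simp only [List.dropLast_concat]
    apply div_nonneg _ hln.le
    have := Real.log_nonpos (fwd_bd hP x [n]).1 (fwd_bd hP x [n]).2
    linarith
  · convert hHP.hasSum using 1
    funext v
    rw [← Finset.sum_div, Finset.sum_neg_distrib, tele hT hP v.2, phi_eq]
    ring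

lemma AB_sum {T : Set (List ℕ)} (hT : IsTree T) {P Q : List ℕ → ℝ} (hP : IsProbOn (bdry T) P)
    (hQ : IsProbOn (bdry T) Q)
    (hl : Summable fun v : bdry T => ((v : List ℕ).length : ℝ) * P v)
    (hD : Summable fun v : bdry T => |P v * Real.logb 2 (P v / Q v)|) :
    Summable (fun z : List ℕ × ℕ =>
      |mass T P (z.1 ++ [z.2]) - mass T P z.1 * fwd T Q z.1 (z.1 ++ [z.2])|) ∧
    ∑' z : List ℕ × ℕ, |mass T P (z.1 ++ [z.2]) - mass T P z.1 * fwd T Q z.1 (z.1 ++ [z.2])|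
      ≤ Real.sqrt ((2 * expLen T (fun _ => 1) P) *
        (Real.log 2 * ∑' v : bdry T, P v * Real.logb 2 (P v / Q v))) := by
  have hA := A_hasSum hP hl
  have hB := B_hasSum hT hP hQ hl
  have hc := c_hasSum hT hP hQ hl hD
  have hAB := ((hA.mul_left 2).add (hB.mul_left 4)).div_const 3
  rw [show (2 * expLen T (fun _ => 1) P + 4 * expLen T (fun _ => 1) P) / 3
    = 2 * expLen T (fun _ => 1) P by ring] at hAB
  refine cs_tsum (fun _ => abs_nonneg _) ?_ ?_ ?_ hAB hc
  · intro z
    have := mass_nonneg hP (z.1 ++ [z.2])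
    have := mul_nonneg (mass_nonneg hP z.1) (fwd_bd hQ z.1 [z.2]).1
    positivity
  · intro z
    rcases (mass_nonneg hP (z.1 ++ [z.2])).eq_or_lt with h | h
    · simp [← h]
    · exact mul_nonneg h.le (g2_nonneg hP hQ _ _ h)
  · intro z
    rcases g2_form hP hQ z.1 z.2 with ⟨h1, h2, h3⟩ | ⟨h1, h2⟩
    · rw [h3]; exact aux_pinsker h1 h2
    · simp [h1, h2]

lemma local_bound {T : Set (List ℕ)} (hT : IsTree T) {P Q : List ℕ → ℝ}
    (hP : IsProbOn (bdry T) P) (hQ : IsProbOn (bdry T) Q) {x : List ℕ} {ε : ℝ} {M : ℕ}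
    (hM : ∃ F : Finset (List ℕ), ↑F ⊆ succs T x ∧ F.card ≤ M ∧
      (Summable fun y : {y : List ℕ // y ∈ succs T x ∧ y ∉ F} => phi (fwd T P x y)) ∧
      (∑' y : {y : List ℕ // y ∈ succs T x ∧ y ∉ F}, phi (fwd T P x y)) < ε ∧
      (Summable fun y : {y : List ℕ // y ∈ succs T x ∧ y ∉ F} => phi (fwd T Q x y)) ∧
      (∑' y : {y : List ℕ // y ∈ succs T x ∧ y ∉ F}, phi (fwd T Q x y)) < ε)
    {δ : ℝ} (hδ0 : 0 < δ) (hδ : δ < 1/2)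
    (hs : Summable fun n : ℕ => |fwd T P x (x ++ [n]) - fwd T Q x (x ++ [n])|) :
    |∑' n : ℕ, phi (fwd T P x (x ++ [n])) - Hloc T Q x| ≤ ε + M * phi δ
      + 2 / (Real.exp 1 * Real.log 2) / δ *
        ∑' n : ℕ, |fwd T P x (x ++ [n]) - fwd T Q x (x ++ [n])| := by
  obtain ⟨F, hF, hcard, sP, lP, sQ, lQ⟩ := hM
  have hz : ∀ R : List ℕ → ℝ, ∀ y, y ∉ T → fwd T R x y = 0 := by
    intro R y hy
    simp [fwd, not_tree hT R hy]
  have e1 := split_hasSum (f := fun y => phi (fwd T P x y)) hF sP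
  have e2 := split_hasSum (f := fun y => phi (fwd T Q x y)) hF sQ
  have e1' := ((succ_hasSum (f := fun y => phi (fwd T P x y))
    (fun y hy => by simp [hz P y hy, phi])).mpr e1).tsum_eq
  have e2' : Hloc T Q x = _ := e2.tsum_eq
  have e3 := (succ_hasSum (T := T) (f := fun y => |fwd T P x y - fwd T Q x y|)
    (fun y hy => by simp [hz P y hy, hz Q y hy])).mp hs.hasSum
  have e4 := hasSum_subtype_iff_indicator.mp
    (show HasSum ((fun y => |fwd T P x y - fwd T Q x y|) ∘ ((↑) : succs T x → List ℕ)) _ from e3)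
  have e5 : ∑ y ∈ F, |fwd T P x y - fwd T Q x y|
      ≤ ∑' n : ℕ, |fwd T P x (x ++ [n]) - fwd T Q x (x ++ [n])| := by
    refine le_trans (le_of_eq ?_) (sum_le_hasSum F (fun y _ => ?_) e4)
    · apply Finset.sum_congr rfl
      intro y hy
      rw [Set.indicator_of_mem (hF hy)]
    · apply Set.indicator_nonneg
      intro y _
      exact abs_nonneg _
  have bd : ∀ {R : List ℕ → ℝ}, IsProbOn (bdry T) R → ∀ y ∈ succs T x,
      0 ≤ fwd T R x y ∧ fwd T R x y ≤ 1 := by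
    rintro R hR y ⟨-, n, rfl⟩
    exact fwd_bd hR x [n]
  have nP : 0 ≤ ∑' y : {y : List ℕ // y ∈ succs T x ∧ y ∉ F}, phi (fwd T P x y) :=
    tsum_nonneg fun y => phi_nonneg (bd hP y y.2.1).1 (bd hP y y.2.1).2
  have nQ : 0 ≤ ∑' y : {y : List ℕ // y ∈ succs T x ∧ y ∉ F}, phi (fwd T Q x y) :=
    tsum_nonneg fun y => phi_nonneg (bd hQ y y.2.1).1 (bd hQ y y.2.1).2
  have e6 : |∑ y ∈ F, phi (fwd T P x y) - ∑ y ∈ F, phi (fwd T Q x y)|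
      ≤ M * phi δ + 2 / (Real.exp 1 * Real.log 2) / δ *
        ∑ y ∈ F, |fwd T P x y - fwd T Q x y| := by
    rw [← Finset.sum_sub_distrib]
    refine (Finset.abs_sum_le_sum_abs _ _).trans ?_
    refine (Finset.sum_le_sum (g := fun y => phi δ + 2 / (Real.exp 1 * Real.log 2) / δ *
      |fwd T P x y - fwd T Q x y|) (fun y hy => ?_)).trans ?_
    · have b1 := bd hP y (hF hy)
      have b2 := bd hQ y (hF hy)
      exact phi_diff b1.1 b1.2 b2.1 b2.2 hδ0 hδ
    · rw [Finset.sum_add_distrib, ← Finset.mul_sum, Finset.sum_const, nsmul_eq_mul]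
      have : 0 ≤ phi δ := phi_nonneg hδ0.le (by linarith)
      have : (F.card : ℝ) ≤ M := by exact_mod_cast hcard
      gcongr
  have hln : 0 < Real.log 2 := Real.log_pos (by norm_num)
  have e7 := mul_le_mul_of_nonneg_left e5
    (show 0 ≤ 2 / (Real.exp 1 * Real.log 2) / δ by positivity)
  rw [e1', e2']
  rw [abs_le] at e6 ⊢
  constructor <;> linarith [e6.1, e6.2]
/-- Comparison with a memoryless reference measure (generalised Böcherer–Amjad bound):
with the standard length function `ℓ ≡ 1` and constant local entropies `H_q(x) = h`,
`|H(P)/ℓ_♯(P) − h| ≤ 2ε + M·φ(δ) + (C/δ)·√(D(P‖Q)/ℓ_♯(P))`. -/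
theorem boecherer_amjad
    (T : Set (List ℕ)) (hT : IsTree T) (hU : NoUnary T) (hG : NoInfGeo T)
    (hB : (bdry T).Nonempty) (hroot : ([] : List ℕ) ∈ intr T)
    (P Q : List ℕ → ℝ) (hP : IsProbOn (bdry T) P) (hQ : IsProbOn (bdry T) Q)
    (hlenSharpP : Summable fun v : bdry T => ((v : List ℕ).length : ℝ) * P v)
    (hlenSharpQ : Summable fun v : bdry T => ((v : List ℕ).length : ℝ) * Q v)
    (hHP : Summable fun v : bdry T => phi (P v))
    (hHQ : Summable fun v : bdry T => phi (Q v))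
    (hD : Summable fun v : bdry T => |P v * Real.logb 2 (P v / Q v)|)
    (h : ℝ) (hconst : ∀ x ∈ intr T, Hloc T Q x = h)
    (ε : ℝ) (hε : 0 < ε) (M : ℕ)
    (hM : ∀ x ∈ intr T, ∃ F : Finset (List ℕ), ↑F ⊆ succs T x ∧ F.card ≤ M ∧
      (Summable fun y : {y : List ℕ // y ∈ succs T x ∧ y ∉ F} => phi (fwd T P x y)) ∧
      (∑' y : {y : List ℕ // y ∈ succs T x ∧ y ∉ F}, phi (fwd T P x y)) < ε ∧
      (Summable fun y : {y : List ℕ // y ∈ succs T x ∧ y ∉ F} => phi (fwd T Q x y)) ∧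
      (∑' y : {y : List ℕ // y ∈ succs T x ∧ y ∉ F}, phi (fwd T Q x y)) < ε)
    (δ : ℝ) (hδ0 : 0 < δ) (hδ : δ < 1/2) :
    |(∑' v : bdry T, phi (P v)) / expLen T (fun _ => 1) P - h|
      ≤ 2 * ε + M * phi δ
        + (2 * Real.sqrt 2 / (Real.exp 1 * Real.sqrt (Real.log 2))) / δ
            * Real.sqrt ((∑' v : bdry T, P v * Real.logb 2 (P v / Q v))
                / expLen T (fun _ => 1) P) := by
  have hln : 0 < Real.log 2 := Real.log_pos (by norm_num)
  have hphi : 0 ≤ phi δ := phi_nonneg hδ0.le (by linarith)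
  set K : ℝ := 2 / (Real.exp 1 * Real.log 2) / δ with hK
  have hK0 : 0 ≤ K := by positivity
  obtain ⟨hABs, hABle⟩ := AB_sum hT hP hQ hlenSharpP hD
  have hw := w_total hT hP hlenSharpP
  have hH := H_hasSum hT hP hHP
  have hlen := len_hasSum hlenSharpP
  set L := expLen T (fun _ => 1) P with hL
  set D := ∑' v : bdry T, P v * Real.logb 2 (P v / Q v) with hDdef
  set H := ∑' v : bdry T, phi (P v) with hHdef
  have hL1 : 1 ≤ L := by
    refine hasSum_le (fun v => ?_) hP.2 hlen
    have hv : (v : List ℕ) ≠ [] := fun h => hroot.2 (h ▸ v.2)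
    have h1 : (1 : ℝ) ≤ (v : List ℕ).length := by
      exact_mod_cast List.length_pos_iff.mpr hv
    have := (hP.1 v v.2).le
    nlinarith
  -- sums over interior nodes
  have hHx := hH.prod_fiberwise (fun x => (hH.summable.prod_factor x).hasSum)
  have hABx := hABs.hasSum.prod_fiberwise (fun x => (hABs.prod_factor x).hasSum)
  simp only at hHx hABx
  have hdiff := hHx.sub (hw.mul_right h)
  have hbd := (hw.mul_right (ε + M * phi δ)).add (hABx.mul_left K)
  have hloc : ∀ x : List ℕ,
      |∑' n : ℕ, mass T P x * phi (fwd T P x (x ++ [n])) - (intr T).indicator (mass T P) x * h|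
        ≤ (intr T).indicator (mass T P) x * (ε + M * phi δ) +
          K * ∑' n : ℕ, |mass T P (x ++ [n]) - mass T P x * fwd T Q x (x ++ [n])| := by
    intro x
    have hn : 0 ≤ K * ∑' n : ℕ, |mass T P (x ++ [n]) - mass T P x * fwd T Q x (x ++ [n])| :=
      mul_nonneg hK0 (tsum_nonneg fun _ => abs_nonneg _)
    by_cases hx : x ∈ intr T
    · rw [Set.indicator_of_mem hx]
      rcases (mass_nonneg hP x).eq_or_lt with h0 | h0
      · simp only [← h0, zero_mul, tsum_zero, sub_zero, abs_zero, zero_add] at hn ⊢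
        exact hn
      · have e : ∀ n : ℕ, |mass T P (x ++ [n]) - mass T P x * fwd T Q x (x ++ [n])|
            = mass T P x * |fwd T P x (x ++ [n]) - fwd T Q x (x ++ [n])| := by
          intro n
          have : mass T P (x ++ [n]) = mass T P x * fwd T P x (x ++ [n]) := by
            unfold fwd; field_simp
          rw [this, ← mul_sub, abs_mul, abs_of_pos h0]
        have hs : Summable fun n : ℕ => |fwd T P x (x ++ [n]) - fwd T Q x (x ++ [n])| := by
          have := hABs.prod_factor x
          simp only [e] at this
          exact (summable_mul_left_iff h0.ne').mp this
        have hb := local_bound hT hP hQ (hM x hx) hδ0 hδ hs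
        rw [hconst x hx] at hb
        simp only [e]
        rw [tsum_mul_left, tsum_mul_left, ← mul_sub, abs_mul, abs_of_pos h0]
        have := mul_le_mul_of_nonneg_left hb h0.le
        rw [← hK] at this
        linarith
    · rw [Set.indicator_of_notMem hx]
      have : ∀ n : ℕ, phi (fwd T P x (x ++ [n])) = 0 := by
        intro n; simp [fwd, not_intr hT P hx, phi]
      simp only [this, mul_zero, tsum_zero, zero_mul, sub_zero, abs_zero, zero_add]
      exact hn
  have hup : H - L * h ≤ L * (ε + M * phi δ) + K * _ :=
    hasSum_le (fun x => (abs_le.mp (hloc x)).2) hdiff hbd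
  have hlow : -(L * (ε + M * phi δ) + K * _) ≤ H - L * h :=
    hasSum_le (fun x => (abs_le.mp (hloc x)).1) hbd.neg hdiff
  have habs := abs_le.mpr ⟨hlow, hup⟩
  have hL0 : 0 < L := by linarith
  have e1 : H / L - h = (H - L * h) / L := by field_simp
  rw [e1, abs_div, abs_of_pos hL0, div_le_iff₀ hL0]
  have hKs := mul_le_mul_of_nonneg_left hABle hK0
  have e2 : K * Real.sqrt ((2 * L) * (Real.log 2 * D)) =
      (2 * Real.sqrt 2 / (Real.exp 1 * Real.sqrt (Real.log 2))) / δ * Real.sqrt (D / L) * L := by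
    rw [show (2 * L) * (Real.log 2 * D) = 2 * (Real.log 2 * (L ^ 2 * (D / L))) by field_simp,
      Real.sqrt_mul (by norm_num), Real.sqrt_mul hln.le, Real.sqrt_mul (by positivity),
      Real.sqrt_sq hL0.le, hK]
    have h5 : Real.log 2 = Real.sqrt (Real.log 2) * Real.sqrt (Real.log 2) :=
      (Real.mul_self_sqrt hln.le).symm
    have h6 : 0 < Real.sqrt (Real.log 2) := Real.sqrt_pos.mpr hln
    have h7 : 2 / (Real.exp 1 * Real.log 2) * Real.sqrt (Real.log 2)
        = 2 / (Real.exp 1 * Real.sqrt (Real.log 2)) := by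
      conv_lhs => rw [h5]
      rw [Real.sqrt_mul_self h6.le]
      field_simp
    calc _ = (2 / (Real.exp 1 * Real.log 2) * Real.sqrt (Real.log 2)) / δ * Real.sqrt 2
          * Real.sqrt (D / L) * L := by ring
      _ = _ := by rw [h7]; ring
  have : 0 ≤ ε * L := by positivity
  nlinarith
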